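/- Let d ≥ 4 be an even integer, n = d²/2, and in R = 𝔽₂[x]/(xⁿ−1) set a = 1 + x and b = (1+x)·P_{d+1}(x) (so that b = 1 + x^{d+1} and wt(a) + wt(b) = 4, i.e., every stabilizer generator has weight 4). Then dim_{𝔽₂} C₁(a,b) − dim_{𝔽₂} C₂(a,b) = 2 and d_GB(a,b) = d; that is, the GB code of (a,b) is a [[d², 2, d]] quantum code, and for d ≥ 6 it is degenerate since its stabilizer generators have weight 4 < d. -/

import Mathlib

open Polynomial

noncomputable section

/-- `R2 n` is the ring `𝔽₂[x]/(xⁿ − 1)`. -/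
abbrev R2 (n : ℕ) : Type := AdjoinRoot (X ^ n - 1 : (ZMod 2)[X])

/-- The image of `x` in `𝔽₂[x]/(xⁿ − 1)`. -/
def xR (n : ℕ) : R2 n := AdjoinRoot.root _

/-- The quotient map `𝔽₂[x] → 𝔽₂[x]/(xⁿ − 1)`. -/
def mkR (n : ℕ) : (ZMod 2)[X] →+* R2 n := AdjoinRoot.mk _

lemma xR_pow_n (n : ℕ) : xR n ^ n = 1 := by
  have h : (AdjoinRoot.mk (X ^ n - 1 : (ZMod 2)[X])) (X ^ n - 1) = 0 := AdjoinRoot.mk_self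
  rw [map_sub, map_pow, AdjoinRoot.mk_X, map_one, sub_eq_zero] at h
  exact h

/-- The unique representative of degree `< n` of an element of `𝔽₂[x]/(xⁿ − 1)` (junk if `n = 0`). -/
def repP {n : ℕ} (u : R2 n) : (ZMod 2)[X] :=
  if h : n = 0 then 0
  else AdjoinRoot.modByMonicHom (by simpa using monic_X_pow_sub_C (1 : ZMod 2) h) u

/-- The Hamming weight of an element of `𝔽₂[x]/(xⁿ − 1)`: the number of nonzero coefficients
of its degree-`< n` representative. -/
def wt {n : ℕ} (u : R2 n) : ℕ := (repP u).support.card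

/-- Coefficient of the degree-`< n` representative, indexed by `ℤ/n`. -/
def coeffZ {n : ℕ} (u : R2 n) (i : ZMod n) : ZMod 2 := (repP u).coeff i.val

/-- The X-stabilizer space `C₂(a,b) = {(r·a, r·b) : r ∈ R}` of the GB code of `(a,b)`. -/
def C2set (n : ℕ) (a b : R2 n) : Set (R2 n × R2 n) := {p | ∃ r : R2 n, p = (r * a, r * b)}

/-- The space `C₁(a,b) = {(u,v) : u·b + v·a = 0}` of the GB code of `(a,b)`. -/
def C1set (n : ℕ) (a b : R2 n) : Set (R2 n × R2 n) := {p | p.1 * b + p.2 * a = 0}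

/-- The (X-side) minimum distance of the GB code of `(a,b)`. -/
def dGB (n : ℕ) (a b : R2 n) : ℕ :=
  sInf {k | ∃ p ∈ C1set n a b \ C2set n a b, wt p.1 + wt p.2 = k}

/-- `P_m(x) = 1 + x + ⋯ + x^{m−1}` as a polynomial over `𝔽₂`. -/
def PmP (m : ℕ) : (ZMod 2)[X] := ∑ i ∈ Finset.range m, X ^ i

/-- `P_m(x) = 1 + x + ⋯ + x^{m−1}` as an element of `𝔽₂[x]/(xⁿ − 1)`. -/
def PmR (n m : ℕ) : R2 n := ∑ i ∈ Finset.range m, xR n ^ i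

/-- The ring endomorphism of `𝔽₂[x]/(xⁿ − 1)` induced by `x ↦ x^d`. -/
def substHom (n d : ℕ) : R2 n →+* R2 n :=
  AdjoinRoot.lift (algebraMap (ZMod 2) (R2 n)) (xR n ^ d) (by
    simp only [eval₂_sub, eval₂_X_pow, eval₂_one]
    rw [← pow_mul, mul_comm d n, pow_mul, xR_pow_n, one_pow, sub_self])

/-- The Euclidean inner product on `𝔽₂²ⁿ`, in terms of pairs `(u₁, u₂)` of elements of
`𝔽₂[x]/(xⁿ − 1)` (representing the concatenated binary vector `(u₁ | u₂)`). -/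
def eucInner (n : ℕ) (p q : R2 n × R2 n) : ZMod 2 :=
  ∑ i ∈ Finset.range n,
    ((repP p.1).coeff i * (repP q.1).coeff i + (repP p.2).coeff i * (repP q.2).coeff i)

/-- The symplectic inner product of `u₁ + w·u₂` and `v₁ + w·v₂`, i.e.
`Σᵢ (u₁ᵢ·v₂ᵢ + u₂ᵢ·v₁ᵢ)`, in terms of the pairs `(u₁,u₂)`, `(v₁,v₂)`. -/
def sympInner (n : ℕ) (p q : R2 n × R2 n) : ZMod 2 :=
  ∑ i ∈ Finset.range n,
    ((repP p.1).coeff i * (repP q.2).coeff i + (repP p.2).coeff i * (repP q.1).coeff i)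

/-- Euclidean dual of a set of (pairs representing) binary vectors of length `2n`. -/
def eucDual (n : ℕ) (S : Set (R2 n × R2 n)) : Set (R2 n × R2 n) :=
  {p | ∀ q ∈ S, eucInner n q p = 0}

/-- Symplectic dual of a set of (pairs representing) vectors of `𝔽₄ⁿ`. -/
def sympDual (n : ℕ) (S : Set (R2 n × R2 n)) : Set (R2 n × R2 n) :=
  {p | ∀ q ∈ S, sympInner n q p = 0}

/-- Number of nonzero `𝔽₄`-coordinates of `u₁ + w·u₂`, in terms of the pair `(u₁,u₂)`. -/
def wt4 (n : ℕ) (p : R2 n × R2 n) : ℕ := ((repP p.1).support ∪ (repP p.2).support).card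

/-- The `2n` binary coordinates of a pair `(u₁,u₂)`. -/
def coords {n : ℕ} (p : R2 n × R2 n) : (Fin n ⊕ Fin n) → ZMod 2 :=
  Sum.elim (fun i => (repP p.1).coeff i) (fun i => (repP p.2).coeff i)

/-- Vertex set of the Tanner graph: check vertices `x_t` (left) and data vertices
`q_s`, `q'_s` (right). -/
def TV (n : ℕ) : Type := (ZMod n) ⊕ ((ZMod n) ⊕ (ZMod n))

/-- `trel a b v w` holds iff `v` is a check vertex `x_t`, `w` is a data vertex, and they are
connected: `x_t ~ q_s` iff `a_{s−t} = 1`, and `x_t ~ q'_s` iff `b_{s−t} = 1`. -/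
def trel {n : ℕ} (a b : R2 n) (v w : TV n) : Prop :=
  ∃ t s : ZMod n, v = Sum.inl t ∧
    ((w = Sum.inr (Sum.inl s) ∧ coeffZ a (s - t) = 1) ∨
     (w = Sum.inr (Sum.inr s) ∧ coeffZ b (s - t) = 1))

/-- The Tanner graph `T(a,b)` of the GB code of `(a,b)`. -/
def tanner (n : ℕ) (a b : R2 n) : SimpleGraph (TV n) where
  Adj v w := trel a b v w ∨ trel a b w v
  symm := ⟨fun v w h => Or.symm h⟩
  loopless := by
    constructor
    rintro v (⟨t, s, hv, hw⟩ | ⟨t, s, hv, hw⟩) <;>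
      rcases hw with ⟨hw, -⟩ | ⟨hw, -⟩ <;> (subst hv; simp at hw)

end

noncomputable section

namespace GBCode

variable {n : ℕ}

lemma monic_X_pow_sub_one (hn : n ≠ 0) : (X ^ n - 1 : (ZMod 2)[X]).Monic := by
  simpa using monic_X_pow_sub_C (1 : ZMod 2) hn

lemma add_self_eq_zero {M : Type*} [AddCommGroup M] [Module (ZMod 2) M] (u : M) :
    u + u = 0 := by
  rw [← two_smul (ZMod 2) u, show (2 : ZMod 2) = 0 from rfl, zero_smul]

lemma eq_of_add_eq_zero {M : Type*} [AddCommGroup M] [Module (ZMod 2) M] {u v : M}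
    (h : u + v = 0) : u = v := by
  rw [← add_left_inj v, h, add_self_eq_zero]

lemma zmod_two_eq_zero_or_one (c : ZMod 2) : c = 0 ∨ c = 1 := by
  revert c; decide

/-! ### Weights -/

lemma mk_X_pow (i : ℕ) : AdjoinRoot.mk (X ^ n - 1 : (ZMod 2)[X]) (X ^ i) = xR n ^ i := by
  rw [map_pow, AdjoinRoot.mk_X]; rfl

lemma repP_mk (hn : n ≠ 0) (p : (ZMod 2)[X]) :
    repP (AdjoinRoot.mk (X ^ n - 1 : (ZMod 2)[X]) p) = p %ₘ (X ^ n - 1) := by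
  rw [repP, dif_neg hn, AdjoinRoot.modByMonicHom_mk]

lemma mk_repP (hn : n ≠ 0) (u : R2 n) :
    AdjoinRoot.mk (X ^ n - 1 : (ZMod 2)[X]) (repP u) = u := by
  rw [repP, dif_neg hn]
  exact AdjoinRoot.mk_leftInverse (monic_X_pow_sub_one hn) u

lemma repP_add (u v : R2 n) : repP (u + v) = repP u + repP v := by
  unfold repP
  split_ifs
  · simp
  · rw [map_add]

lemma wt_zero : wt (0 : R2 n) = 0 := by
  unfold wt repP
  split_ifs <;> simp

lemma wt_add_le (u v : R2 n) : wt (u + v) ≤ wt u + wt v := by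
  unfold wt
  rw [repP_add]
  exact (Finset.card_le_card support_add).trans (Finset.card_union_le _ _)

lemma wt_sum_le {ι : Type*} (s : Finset ι) (f : ι → R2 n) :
    wt (∑ i ∈ s, f i) ≤ ∑ i ∈ s, wt (f i) :=
  Finset.le_sum_of_subadditive wt wt_zero.le wt_add_le s f

lemma wt_sum_pow (hn : n ≠ 0) (s : Finset ℕ) (hs : ∀ i ∈ s, i < n) :
    wt (∑ i ∈ s, xR n ^ i) = s.card := by
  have hdeg : (∑ i ∈ s, X ^ i : (ZMod 2)[X]).degree < (X ^ n - 1 : (ZMod 2)[X]).degree := by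
    rw [← C_1, degree_X_pow_sub_C (Nat.pos_of_ne_zero hn)]
    refine (degree_sum_le _ _).trans_lt ((Finset.sup_lt_iff (WithBot.bot_lt_coe n)).2 ?_)
    intro i hi
    rw [degree_X_pow]
    exact Nat.cast_lt.2 (hs i hi)
  have hrep : repP (∑ i ∈ s, xR n ^ i) = ∑ i ∈ s, X ^ i := by
    simp_rw [← mk_X_pow]
    rw [← map_sum, repP_mk hn, (modByMonic_eq_self_iff (monic_X_pow_sub_one hn)).2 hdeg]
  rw [wt, hrep]
  congr 1
  ext i
  simp [mem_support_iff, coeff_X_pow]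

lemma wt_pow_le (hn : n ≠ 0) (k : ℕ) : wt (xR n ^ k) ≤ 1 := by
  have h : xR n ^ k = xR n ^ (k % n) := by
    conv_lhs => rw [← Nat.div_add_mod k n, pow_add, pow_mul, xR_pow_n, one_pow, one_mul]
  have := wt_sum_pow hn {k % n} (by simpa using Nat.mod_lt _ (Nat.pos_of_ne_zero hn))
  rw [h]
  simpa using this.le

lemma wt_one_add_pow {k : ℕ} (hk : 0 < k) (hkn : k < n) : wt (1 + xR n ^ k) = 2 := by
  have := wt_sum_pow (n := n) (by omega) {0, k} (by simp; omega)
  rwa [Finset.sum_pair hk.ne, Finset.card_pair hk.ne, pow_zero] at this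

lemma eq_sum_pow (hn : n ≠ 0) (u : R2 n) : u = ∑ i ∈ (repP u).support, xR n ^ i := by
  conv_lhs => rw [← mk_repP hn u, as_sum_support (repP u), map_sum]
  refine Finset.sum_congr rfl fun i hi => ?_
  rw [(zmod_two_eq_zero_or_one _).resolve_left (mem_support_iff.1 hi), ← X_pow_eq_monomial,
    mk_X_pow]

lemma wt_mul_le (hn : n ≠ 0) (u v : R2 n) : wt (u * v) ≤ wt u * wt v := by
  conv_lhs => rw [eq_sum_pow hn u, eq_sum_pow hn v, Finset.sum_mul_sum]
  calc _ ≤ ∑ i ∈ (repP u).support, wt (∑ j ∈ (repP v).support, xR n ^ i * xR n ^ j) :=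
        wt_sum_le _ _
    _ ≤ ∑ i ∈ (repP u).support, ∑ j ∈ (repP v).support, 1 := by
        refine Finset.sum_le_sum fun i _ => (wt_sum_le _ _).trans
          (Finset.sum_le_sum fun j _ => ?_)
        rw [← pow_add]
        exact wt_pow_le hn _
    _ = wt u * wt v := by simp [wt]

lemma wt_sum_range_pow_le (hn : n ≠ 0) (f : ℕ → ℕ) (k : ℕ) :
    wt (∑ i ∈ Finset.range k, xR n ^ f i) ≤ k := by
  refine (wt_sum_le _ _).trans ?_
  simpa using Finset.sum_le_sum fun i (_ : i ∈ Finset.range k) => wt_pow_le hn (f i)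

lemma wt_PmR_self (hn : n ≠ 0) : wt (PmR n n) = n := by
  rw [PmR, wt_sum_pow hn _ (by simp), Finset.card_range]

lemma PmR_self_ne_zero (hn : n ≠ 0) : PmR n n ≠ 0 := by
  intro h
  have := wt_PmR_self hn
  rw [h, wt_zero] at this
  exact hn this.symm

/-! ### Geometric sums -/

lemma PmR_add (k l : ℕ) : PmR n (k + l) = PmR n k + xR n ^ k * PmR n l := by
  simp only [PmR, Finset.sum_range_add, Finset.mul_sum, pow_add]

lemma sum_pow_mul_PmR (e k : ℕ) :
    (∑ j ∈ Finset.range k, xR n ^ (e * j)) * PmR n e = PmR n (e * k) := by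
  induction k with
  | zero => simp [PmR]
  | succ k ih => rw [Finset.sum_range_succ, add_mul, ih, Nat.mul_succ, PmR_add]

lemma one_add_mul_PmR (k : ℕ) : (1 + xR n) * PmR n k = 1 + xR n ^ k := by
  induction k with
  | zero => simp [PmR, add_self_eq_zero]
  | succ k ih =>
    have hk : PmR n (k + 1) = PmR n k + xR n ^ k := Finset.sum_range_succ _ _
    rw [hk, mul_add, ih]
    linear_combination add_self_eq_zero (xR n ^ k)

lemma one_add_mul_PmR_self : (1 + xR n) * PmR n n = 0 := by
  rw [one_add_mul_PmR, xR_pow_n, add_self_eq_zero]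

lemma xR_mul_PmR_self : xR n * PmR n n = PmR n n := by
  have := one_add_mul_PmR_self (n := n)
  rw [add_mul, one_mul] at this
  exact (eq_of_add_eq_zero this).symm

/-! ### The augmentation -/

/-- The augmentation `𝔽₂[x]/(xⁿ − 1) → 𝔽₂`, `x ↦ 1`. -/
def aug (n : ℕ) : R2 n →+* ZMod 2 :=
  AdjoinRoot.lift (RingHom.id (ZMod 2)) 1 (by simp)

lemma aug_mk (p : (ZMod 2)[X]) : aug n (AdjoinRoot.mk _ p) = p.eval 1 := by
  rw [aug, AdjoinRoot.lift_mk]; rfl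

lemma aug_xR : aug n (xR n) = 1 := by
  rw [aug, xR, AdjoinRoot.lift_root]

lemma X_add_one_eq : (X + 1 : (ZMod 2)[X]) = X - C 1 := by
  rw [C_1]
  linear_combination add_self_eq_zero (1 : (ZMod 2)[X])

lemma exists_eq_one_add_mul_of_aug {u : R2 n} (h : aug n u = 0) :
    ∃ r, u = (1 + xR n) * r := by
  induction u using AdjoinRoot.induction_on with
  | ih p =>
    rw [aug_mk] at h
    obtain ⟨q, hq⟩ := dvd_iff_isRoot.2 h
    refine ⟨AdjoinRoot.mk _ q, ?_⟩
    rw [hq, ← X_add_one_eq, map_mul, map_add, AdjoinRoot.mk_X, map_one, add_comm]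
    rfl

lemma mul_PmR_self (u : R2 n) : u * PmR n n = aug n u • PmR n n := by
  rcases zmod_two_eq_zero_or_one (aug n u) with h | h
  · obtain ⟨r, rfl⟩ := exists_eq_one_add_mul_of_aug h
    rw [h, zero_smul, mul_right_comm, one_add_mul_PmR_self, zero_mul]
  · obtain ⟨r, hr⟩ := exists_eq_one_add_mul_of_aug (u := u - 1) (by rw [map_sub, h]; simp)
    rw [h, one_smul]
    linear_combination PmR n n * hr + r * one_add_mul_PmR_self (n := n)

lemma exists_eq_smul_of_one_add_mul {u : R2 n} (h : (1 + xR n) * u = 0) :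
    ∃ c : ZMod 2, u = c • PmR n n := by
  induction u using AdjoinRoot.induction_on with
  | ih p =>
    have h1 : AdjoinRoot.mk (X ^ n - 1 : (ZMod 2)[X]) ((X - 1) * p) = 0 := by
      rw [← C_1, ← X_add_one_eq, map_mul, map_add, AdjoinRoot.mk_X, map_one, add_comm]
      exact h
    rw [AdjoinRoot.mk_eq_zero, ← mul_geom_sum] at h1
    obtain ⟨q, rfl⟩ := (mul_dvd_mul_iff_left (by simpa using X_sub_C_ne_zero (1 : ZMod 2))).1 h1
    refine ⟨aug n (AdjoinRoot.mk _ q), ?_⟩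
    rw [← mul_PmR_self, map_mul, mul_comm, map_sum]
    simp_rw [mk_X_pow]
    rfl

/-! ### The two code spaces -/

lemma mem_C1set_iff (p : R2 n × R2 n) (P : R2 n) :
    p ∈ C1set n (1 + xR n) ((1 + xR n) * P) ↔
      ∃ c : ZMod 2, p.2 = p.1 * P + c • PmR n n := by
  have key : p.1 * ((1 + xR n) * P) + p.2 * (1 + xR n) = (1 + xR n) * (p.1 * P + p.2) := by
    ring
  rw [C1set, Set.mem_ofPred_eq, key]
  constructor
  · intro h
    obtain ⟨c, hc⟩ := exists_eq_smul_of_one_add_mul h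
    refine ⟨c, ?_⟩
    rw [← hc, ← add_assoc, add_self_eq_zero, zero_add]
  · rintro ⟨c, hc⟩
    rw [hc, ← add_assoc, add_self_eq_zero, zero_add, mul_smul_comm, one_add_mul_PmR_self,
      smul_zero]

lemma mem_C2set_of_aug {u P : R2 n} (h : aug n u = 0) :
    (u, u * P) ∈ C2set n (1 + xR n) ((1 + xR n) * P) := by
  obtain ⟨r, rfl⟩ := exists_eq_one_add_mul_of_aug h
  exact ⟨r, by ext <;> ring⟩

lemma aug_fst_of_mem_C2set {p : R2 n × R2 n} {b : R2 n} (h : p ∈ C2set n (1 + xR n) b) :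
    aug n p.1 = 0 := by
  obtain ⟨r, rfl⟩ := h
  rw [map_mul, map_add, map_one, aug_xR, add_self_eq_zero, mul_zero]

lemma finrank_R2 (hn : n ≠ 0) : Module.finrank (ZMod 2) (R2 n) = n := by
  rw [(AdjoinRoot.powerBasis' (monic_X_pow_sub_one hn)).finrank, AdjoinRoot.powerBasis'_dim,
    ← C_1, natDegree_X_pow_sub_C]

lemma finite_R2 (hn : n ≠ 0) : Module.Finite (ZMod 2) (R2 n) :=
  (AdjoinRoot.powerBasis' (monic_X_pow_sub_one hn)).finite

lemma finrank_span_C1set (hn : n ≠ 0) (P : R2 n) :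
    Module.finrank (ZMod 2)
      ↥(Submodule.span (ZMod 2) (C1set n (1 + xR n) ((1 + xR n) * P))) = n + 1 := by
  have := finite_R2 hn
  let f : (R2 n × ZMod 2) →ₗ[ZMod 2] R2 n × R2 n :=
    (LinearMap.fst (ZMod 2) (R2 n) (ZMod 2)).prod
      ((LinearMap.mulRight (ZMod 2) P).coprod
        (LinearMap.toSpanSingleton (ZMod 2) (R2 n) (PmR n n)))
  have hf : ∀ p, f p = (p.1, p.1 * P + p.2 • PmR n n) := fun p => rfl
  have hrange : C1set n (1 + xR n) ((1 + xR n) * P) = (LinearMap.range f : Set _) := by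
    ext p
    rw [mem_C1set_iff]
    constructor
    · rintro ⟨c, hc⟩
      exact ⟨(p.1, c), by rw [hf, ← hc]⟩
    · rintro ⟨q, rfl⟩
      exact ⟨q.2, rfl⟩
  have hinj : Function.Injective f := by
    rw [← LinearMap.ker_eq_bot, LinearMap.ker_eq_bot']
    rintro ⟨u, c⟩ h
    rw [hf, Prod.mk_eq_zero] at h
    obtain ⟨rfl, h⟩ : u = 0 ∧ _ := h
    rw [zero_mul, zero_add, smul_eq_zero] at h
    exact Prod.ext rfl (h.resolve_right (PmR_self_ne_zero hn))
  rw [hrange, Submodule.span_eq, LinearMap.finrank_range_of_inj hinj, Module.finrank_prod,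
    finrank_R2 hn, Module.finrank_self]

lemma finrank_span_C2set (hn : n ≠ 0) (P : R2 n) :
    Module.finrank (ZMod 2)
      ↥(Submodule.span (ZMod 2) (C2set n (1 + xR n) ((1 + xR n) * P))) + 1 = n := by
  have := finite_R2 hn
  let f : R2 n →ₗ[ZMod 2] R2 n × R2 n :=
    (LinearMap.mulRight (ZMod 2) (1 + xR n)).prod
      (LinearMap.mulRight (ZMod 2) ((1 + xR n) * P))
  have hf : ∀ r, f r = (r * (1 + xR n), r * ((1 + xR n) * P)) := fun r => rfl
  have hrange : C2set n (1 + xR n) ((1 + xR n) * P) = (LinearMap.range f : Set _) := by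
    ext p
    exact ⟨fun ⟨r, hr⟩ => ⟨r, hr.symm⟩, fun ⟨r, hr⟩ => ⟨r, hr.symm⟩⟩
  have hker : LinearMap.ker f = Submodule.span (ZMod 2) {PmR n n} := by
    ext r
    rw [LinearMap.mem_ker, Submodule.mem_span_singleton, hf, Prod.mk_eq_zero]
    constructor
    · rintro ⟨h, -⟩
      obtain ⟨c, hc⟩ := exists_eq_smul_of_one_add_mul (by rwa [mul_comm] at h)
      exact ⟨c, hc.symm⟩
    · rintro ⟨c, rfl⟩
      have h : c • PmR n n * (1 + xR n) = 0 := by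
        rw [smul_mul_assoc, mul_comm, one_add_mul_PmR_self, smul_zero]
      exact ⟨h, by rw [← mul_assoc, h, zero_mul]⟩
  have := LinearMap.finrank_range_add_finrank_ker f
  rw [hker, finrank_span_singleton (PmR_self_ne_zero hn), finrank_R2 hn] at this
  rw [hrange, Submodule.span_eq, this]

/-! ### Minimum distance -/

/-- If `h·u + k·v` is the all-ones word, then its weight `n` is at most
`wt h · wt u + wt k · wt v`. The hypotheses describe a dual word `(h, k)` that pairs to one
with every translate of the codeword `(u, u·P + c·J)`. -/
lemma le_wt_of_pairing (hn : n ≠ 0) {u P h k : R2 n} {c e : ZMod 2} {s t : ℕ}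
    (hs : wt h ≤ s) (ht : wt k ≤ t) (hhk : h + k * P = e • PmR n n)
    (hone : e * aug n u + c * aug n k = 1) :
    n ≤ s * wt u + t * wt (u * P + c • PmR n n) := by
  have key : h * u + k * (u * P + c • PmR n n) = PmR n n := by
    calc h * u + k * (u * P + c • PmR n n) = u * (h + k * P) + c • (k * PmR n n) := by
          rw [mul_add k, mul_smul_comm]; ring
      _ = (e * aug n u + c * aug n k) • PmR n n := by
          rw [hhk, mul_smul_comm, mul_PmR_self, mul_PmR_self, smul_smul, smul_smul, ← add_smul]
      _ = PmR n n := by rw [hone, one_smul]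
  calc n = wt (h * u + k * (u * P + c • PmR n n)) := by rw [key, wt_PmR_self hn]
    _ ≤ wt h * wt u + wt k * wt (u * P + c • PmR n n) :=
        (wt_add_le _ _).trans (add_le_add (wt_mul_le hn _ _) (wt_mul_le hn _ _))
    _ ≤ _ := by gcongr

lemma aug_sum_pow (f : ℕ → ℕ) (k : ℕ) :
    aug n (∑ j ∈ Finset.range k, xR n ^ f j) = k := by
  simp [map_sum, aug_xR]

lemma PmR_two_mul_self : PmR n (2 * n) = 0 := by
  rw [two_mul, PmR_add, xR_pow_n, one_mul, add_self_eq_zero]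

lemma pow_add_sum_pow_mul_PmR {m : ℕ} (hm : 2 ≤ m) (hn : n = 2 * m * m) :
    xR n ^ (2 * n - 1) +
      (∑ j ∈ Finset.range (2 * m - 1), xR n ^ ((2 * m + 1) * j)) * PmR n (2 * m + 1) = 0 := by
  have hmul : (2 * m + 1) * (2 * m - 1) = 2 * n - 1 := by
    obtain ⟨l, rfl⟩ := Nat.exists_eq_add_of_le hm
    subst hn
    zify [show 1 ≤ 2 * (2 + l) by omega, show 1 ≤ 2 * (2 * (2 + l) * (2 + l)) by nlinarith]
    ring
  have hpos : 2 * n - 1 + 1 = 2 * n := by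
    have : 0 < n := by rw [hn]; positivity
    omega
  rw [sum_pow_mul_PmR, hmul, ← PmR_two_mul_self, ← hpos, PmR_add, add_comm]
  simp [PmR]

lemma le_wt_of_aug {m : ℕ} (hm : 2 ≤ m) (hn : n = 2 * m * m) (u : R2 n) (c : ZMod 2)
    (hnontriv : aug n u ≠ 0 ∨ c ≠ 0) :
    2 * m ≤ wt u + wt (u * PmR n (2 * m + 1) + c • PmR n n) := by
  have hn0 : n ≠ 0 := by rw [hn]; positivity
  rcases zmod_two_eq_zero_or_one (aug n u + c * m) with h0 | h1
  · have hc : c = 1 := by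
      refine (zmod_two_eq_zero_or_one c).resolve_left fun hc => ?_
      rw [hc, zero_mul, add_zero] at h0
      exact hnontriv.elim (fun h => h h0) (fun h => h hc)
    subst hc
    have hvert := le_wt_of_pairing hn0 (u := u) (c := 1) (wt_pow_le hn0 (2 * n - 1))
      (wt_sum_range_pow_le hn0 _ (2 * m - 1))
      ((pow_add_sum_pow_mul_PmR hm hn).trans (zero_smul (ZMod 2) (PmR n n)).symm)
      (by
        rw [aug_sum_pow, zero_mul, zero_add, one_mul, Nat.cast_sub (by omega), Nat.cast_mul,
          show ((2 : ℕ) : ZMod 2) = 0 from rfl, zero_mul, Nat.cast_one]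
        rfl)
    obtain ⟨l, rfl⟩ : ∃ l, m = l + 1 := ⟨m - 1, by omega⟩
    have hmul : (2 * (l + 1) + 1) * l + (l + 2) = n := by rw [hn]; ring
    have hdiag := le_wt_of_pairing hn0 (u := u) (c := 1) (P := PmR n (2 * (l + 1) + 1))
      (h := xR n ^ ((2 * (l + 1) + 1) * l) * PmR n (l + 2)) (e := 1)
      ((wt_mul_le hn0 _ _).trans (Nat.mul_le_mul (wt_pow_le hn0 _)
        (wt_sum_range_pow_le hn0 (fun i => i) (l + 2))))
      (wt_sum_range_pow_le hn0 (fun j => (2 * (l + 1) + 1) * j) l)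
      (by
        rw [sum_pow_mul_PmR, one_smul, add_comm, ← PmR_add, hmul])
      (by
        rw [aug_sum_pow]
        push_cast at h0
        generalize aug n u = y at h0
        generalize (l : ZMod 2) = z at h0 ⊢
        revert y z
        decide)
    generalize wt u = U at *
    generalize wt (u * PmR n (2 * (l + 1) + 1) + (1 : ZMod 2) • PmR n n) = V at *
    rw [show 2 * (l + 1) - 1 = 2 * l + 1 by omega] at hvert
    have : (l + 1) ^ 2 * (2 * (l + 1)) ≤ (l + 1) ^ 2 * (U + V) := by
      nlinarith [Nat.mul_le_mul_left l hdiag]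
    exact Nat.le_of_mul_le_mul_left this (by positivity)
  · have hstair := le_wt_of_pairing hn0 (u := u) (c := c) (P := PmR n (2 * m + 1)) (e := 1)
      (wt_sum_range_pow_le hn0 (fun j => 2 * m * j) m)
      (wt_sum_range_pow_le hn0 (fun j => 2 * m * j) m)
      (by
        have hP : PmR n (2 * m + 1) = 1 + xR n * PmR n (2 * m) := by
          rw [add_comm, PmR_add, pow_one]
          simp [PmR]
        rw [hP, mul_add, mul_one, ← add_assoc, add_self_eq_zero, zero_add, mul_left_comm,
          sum_pow_mul_PmR, ← hn, xR_mul_PmR_self, one_smul])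
      (by rw [aug_sum_pow, one_mul, h1])
    have : m * (2 * m) ≤ m * (wt u + wt (u * PmR n (2 * m + 1) + c • PmR n n)) := by
      nlinarith
    exact Nat.le_of_mul_le_mul_left this (by omega)

lemma dGB_eq {m : ℕ} (hm : 2 ≤ m) (hn : n = 2 * m * m) :
    dGB n (1 + xR n) ((1 + xR n) * PmR n (2 * m + 1)) = 2 * m := by
  have hn0 : n ≠ 0 := by rw [hn]; positivity
  have hlower : ∀ p ∈ C1set n (1 + xR n) ((1 + xR n) * PmR n (2 * m + 1)) \
      C2set n (1 + xR n) ((1 + xR n) * PmR n (2 * m + 1)), 2 * m ≤ wt p.1 + wt p.2 := by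
    rintro ⟨u, v⟩ ⟨h1, h2⟩
    obtain ⟨c, rfl : v = u * _ + _⟩ := (mem_C1set_iff _ _).1 h1
    refine le_wt_of_aug hm hn u c ?_
    by_contra! h
    obtain ⟨hu, rfl⟩ := h
    rw [zero_smul, add_zero] at h2
    exact h2 (mem_C2set_of_aug hu)
  obtain ⟨k, hk⟩ : ∃ k, k = ∑ j ∈ Finset.range (2 * m - 1), xR n ^ ((2 * m + 1) * j) :=
    ⟨_, rfl⟩
  have hmem : (k, xR n ^ (2 * n - 1)) ∈ C1set n (1 + xR n) ((1 + xR n) * PmR n (2 * m + 1)) \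
      C2set n (1 + xR n) ((1 + xR n) * PmR n (2 * m + 1)) := by
    constructor
    · refine (mem_C1set_iff _ _).2 ⟨0, ?_⟩
      rw [zero_smul, add_zero]
      rw [hk]
      exact eq_of_add_eq_zero (pow_add_sum_pow_mul_PmR hm hn)
    · intro h
      have := aug_fst_of_mem_C2set h
      rw [hk, aug_sum_pow, ZMod.natCast_eq_zero_iff] at this
      omega
  have hwt : wt k + wt (xR n ^ (2 * n - 1)) = 2 * m := by
    refine le_antisymm ?_ (hlower _ hmem)
    have h1 := wt_sum_range_pow_le hn0 (fun j => (2 * m + 1) * j) (2 * m - 1)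
    have h2 := wt_pow_le hn0 (2 * n - 1)
    rw [← hk] at h1
    omega
  refine le_antisymm (Nat.sInf_le ⟨_, hmem, hwt⟩) (le_csInf ⟨_, _, hmem, hwt⟩ ?_)
  rintro _ ⟨p, hp, rfl⟩
  exact hlower p hp

end GBCode

open GBCode

/-- For even `d ≥ 4`, `2n = d²`, `a = 1 + x`, and
`b = (1+x)·P_{d+1}(x)` in `R = 𝔽₂[x]/(xⁿ−1)`: `b = 1 + x^{d+1}`, the stabilizer
generators have weight `wt(a) + wt(b) = 4`, `dim C₁(a,b) − dim C₂(a,b) = 2`, and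
`d_GB(a,b) = d`; i.e. the GB code of `(a,b)` is a `[[d², 2, d]]` quantum code, which for
`d ≥ 6` is degenerate (it has a nonzero stabilizer of weight `4 < d`). -/
theorem stmt_13 (d n : ℕ) (hd : Even d) (hd4 : 4 ≤ d) (hn : 2 * n = d ^ 2)
    (a b : R2 n) (ha : a = 1 + xR n) (hb : b = (1 + xR n) * PmR n (d + 1)) :
    b = 1 + xR n ^ (d + 1) ∧
    wt a + wt b = 4 ∧
    Module.finrank (ZMod 2) ↥(Submodule.span (ZMod 2) (C1set n a b)) -
        Module.finrank (ZMod 2) ↥(Submodule.span (ZMod 2) (C2set n a b)) = 2 ∧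
    dGB n a b = d ∧
    (6 ≤ d → ∃ p ∈ C2set n a b, p ≠ 0 ∧ wt p.1 + wt p.2 < dGB n a b) := by
  obtain ⟨m, rfl⟩ := hd
  rw [← two_mul] at *
  have hm : 2 ≤ m := by omega
  have hnm : n = 2 * m * m := by linarith
  have hn0 : n ≠ 0 := by rw [hnm]; positivity
  have hlt : 2 * m + 1 < n := by nlinarith
  subst ha hb
  have hwt : wt (1 + xR n) + wt ((1 + xR n) * PmR n (2 * m + 1)) = 4 := by
    have h1 := wt_one_add_pow (n := n) one_pos (by omega)
    rw [pow_one] at h1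
    rw [one_add_mul_PmR, h1, wt_one_add_pow (Nat.succ_pos _) hlt]
  refine ⟨one_add_mul_PmR _, hwt, ?_, dGB_eq hm hnm, fun h6 => ?_⟩
  · have h1 := finrank_span_C1set hn0 (PmR n (2 * m + 1))
    have h2 := finrank_span_C2set hn0 (PmR n (2 * m + 1))
    omega
  · refine ⟨(1 + xR n, (1 + xR n) * PmR n (2 * m + 1)), ⟨1, by simp⟩, fun h => ?_, ?_⟩
    · rw [Prod.mk_eq_zero] at h
      rw [h.2, h.1, wt_zero] at hwt
      omega
    · rw [dGB_eq hm hnm, hwt]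
      omega

end
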